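/- Let ε be a nonzero real number. Then the sequence n ↦ ε^n · B_{n−1} is not exponentially bounded: for all real numbers C > 0 and K > 0 there exists n ≥ 1 such that |ε^n · B_{n−1}| > C · K^n. -/

import Mathlib

/-!
Euler's formula `ζ(2k) = (2π)^(2k) |B_{2k}| / (2 (2k)!)` and `ζ(2k) > 1` give
`|B_{2k}| > 2 (2k)! / (2π)^(2k)`. Factorials outgrow every geometric sequence, so
`|c^(2k) B_{2k}| → ∞` for every `c ≠ 0`; the theorem is the case `c = ε / K`, read at `n = 2k + 1`.
-/

open Filter
open scoped Nat Real

theorem hasSum_one_div_pow_two_mul_abs_bernoulli {k : ℕ} (hk : k ≠ 0) :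
    HasSum (fun n : ℕ ↦ 1 / (n : ℝ) ^ (2 * k))
      ((2 * π) ^ (2 * k) * |(bernoulli (2 * k) : ℝ)| / (2 * (2 * k)!)) := by
  have euler := hasSum_zeta_nat hk
  convert euler using 1
  rw [← abs_of_nonneg (euler.nonneg fun n ↦ by positivity)]
  have two_pow : (2 : ℝ) ^ (2 * k) = 2 * 2 ^ (2 * k - 1) :=
    (mul_pow_sub_one (by positivity) 2).symm
  simp only [abs_div, abs_mul, abs_pow, abs_neg, abs_one, one_pow, one_mul, Nat.abs_cast,
    Nat.abs_ofNat, abs_of_pos Real.pi_pos, mul_pow, two_pow]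
  field_simp

theorem one_lt_of_hasSum_one_div_pow {m : ℕ} {s : ℝ}
    (hs : HasSum (fun n : ℕ ↦ 1 / (n : ℝ) ^ m) s) : 1 < s := by
  have first_terms_le : 1 + 1 / (2 : ℝ) ^ m ≤ s := by
    simpa using sum_le_hasSum {1, 2} (fun n _ ↦ by positivity) hs
  have second_term_pos : 0 < 1 / (2 : ℝ) ^ m := by positivity
  linarith

theorem two_mul_factorial_div_two_pi_pow_lt_abs_bernoulli {k : ℕ} (hk : k ≠ 0) :
    2 * (2 * k)! / (2 * π) ^ (2 * k) < |(bernoulli (2 * k) : ℝ)| := by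
  have one_lt_zeta := one_lt_of_hasSum_one_div_pow (hasSum_one_div_pow_two_mul_abs_bernoulli hk)
  rwa [one_lt_div (by positivity), ← div_lt_iff₀' (by positivity)] at one_lt_zeta

theorem tendsto_pow_mul_factorial_atTop {c : ℝ} (hc : 0 < c) :
    Tendsto (fun n : ℕ ↦ c ^ n * n !) atTop atTop := by
  have inv_tendsto : Tendsto (fun n : ℕ ↦ c⁻¹ ^ n / n !) atTop (nhdsWithin 0 (Set.Ioi 0)) :=
    tendsto_nhdsWithin_iff.mpr ⟨FloorSemiring.tendsto_pow_div_factorial_atTop c⁻¹,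
      .of_forall fun n ↦ Set.mem_Ioi.mpr (by positivity)⟩
  refine inv_tendsto.inv_tendsto_nhdsGT_zero.congr fun n ↦ ?_
  simp [div_eq_mul_inv, mul_comm]

theorem tendsto_abs_pow_mul_bernoulli_two_mul_atTop {c : ℝ} (hc : c ≠ 0) :
    Tendsto (fun k : ℕ ↦ |c ^ (2 * k) * (bernoulli (2 * k) : ℝ)|) atTop atTop := by
  have factorial_tendsto :
      Tendsto (fun k : ℕ ↦ (|c| / (2 * π)) ^ (2 * k) * (2 * k)!) atTop atTop :=
    (tendsto_pow_mul_factorial_atTop (by positivity)).comp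
      (tendsto_id.const_mul_atTop' two_pos)
  refine tendsto_atTop_mono' atTop ?_ factorial_tendsto
  filter_upwards [eventually_ne_atTop 0] with k hk
  calc (|c| / (2 * π)) ^ (2 * k) * (2 * k)!
      = |c| ^ (2 * k) * ((2 * k)! / (2 * π) ^ (2 * k)) := by rw [div_pow]; ring
    _ ≤ |c| ^ (2 * k) * (2 * (2 * k)! / (2 * π) ^ (2 * k)) := by
        gcongr
        exact le_mul_of_one_le_left (by positivity) one_le_two
    _ ≤ |c| ^ (2 * k) * |(bernoulli (2 * k) : ℝ)| := by
        gcongr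
        exact (two_mul_factorial_div_two_pi_pow_lt_abs_bernoulli hk).le
    _ = |c ^ (2 * k) * (bernoulli (2 * k) : ℝ)| := by rw [abs_mul, abs_pow]

theorem bushy_log_coefficients_not_exponentially_bounded
    (ε : ℝ) (hε : ε ≠ 0) :
    ∀ C > (0 : ℝ), ∀ K > (0 : ℝ), ∃ n : ℕ, 1 ≤ n ∧
      |ε ^ n * (bernoulli (n - 1) : ℝ)| > C * K ^ n := by
  intro C _ K hK
  obtain ⟨k, hk⟩ := ((tendsto_abs_pow_mul_bernoulli_two_mul_atTop
    (div_ne_zero hε hK.ne')).eventually_gt_atTop (C * K / |ε|)).exists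
  refine ⟨2 * k + 1, Nat.le_add_left 1 _, ?_⟩
  rw [Nat.add_sub_cancel]
  calc C * K ^ (2 * k + 1)
      = |ε| * K ^ (2 * k) * (C * K / |ε|) := by rw [pow_succ]; field_simp
    _ < |ε| * K ^ (2 * k) * |(ε / K) ^ (2 * k) * (bernoulli (2 * k) : ℝ)| := by gcongr
    _ = |ε ^ (2 * k + 1) * (bernoulli (2 * k) : ℝ)| := by
        simp only [abs_mul, abs_pow, abs_div, abs_of_pos hK, div_pow, pow_succ]
        field_simp
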